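/- Let (V,Q) be a regular 5-dimensional quadratic space over a field k of characteristic not 2. If g ∈ Cliff₀(V) satisfies g*g ∈ k^×, then g⁻¹Vg = V; hence GSpin(V) = {g ∈ Cliff₀(V) : g*g ∈ k^×}. -/

import Mathlib

set_option linter.unusedSimpArgs false

namespace GSpinFive

open CliffordAlgebra

section Alg

variable {k A : Type*} [Field k] [Ring A] [Algebra k A]

theorem swap_pow {a b : A} (h : b * a = -(a * b)) (n : ℕ) :
    b * a ^ n = (-1 : k) ^ n • (a ^ n * b) := by
  induction n with
  | zero => simp
  | succ n ih =>
    rw [pow_succ, ← mul_assoc, ih, smul_mul_assoc, mul_assoc, h, pow_succ]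
    simp [mul_assoc]

theorem swap_pow' {a b : A} (h : b * a = -(a * b)) (n : ℕ) (x : A) :
    b * (a ^ n * x) = (-1 : k) ^ n • (a ^ n * (b * x)) := by
  rw [← mul_assoc, swap_pow (k := k) h, smul_mul_assoc, mul_assoc]

theorem pow_red {a : A} {q : k} (h : a * a = q • (1 : A)) (n : ℕ) :
    ∃ (c : k) (r : Fin 2), a ^ n = c • a ^ (r : ℕ) := by
  have h2 : ∀ m : ℕ, a ^ (2 * m) = q ^ m • (1 : A) := by
    intro m
    rw [pow_mul, pow_two, h, smul_pow, one_pow]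
  rcases Nat.even_or_odd' n with ⟨m, rfl | rfl⟩
  · exact ⟨q ^ m, 0, by simp [h2]⟩
  · exact ⟨q ^ m, 1, by simp [pow_succ _ (2 * m), h2]⟩

/-- ordered monomials -/
def mon (e : Fin 5 → A) (n : Fin 5 → ℕ) : A :=
  e 0 ^ n 0 * (e 1 ^ n 1 * (e 2 ^ n 2 * (e 3 ^ n 3 * e 4 ^ n 4)))

theorem mul_mon (e : Fin 5 → A) (h : ∀ i j, i ≠ j → e i * e j = -(e j * e i)) (i : Fin 5)
    (n : Fin 5 → ℕ) : ∃ (c : k) (m : Fin 5 → ℕ), e i * mon e n = c • mon e m := by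
  have s := fun (i j : Fin 5) (hij : i ≠ j) (n : ℕ) (x : A) => swap_pow' (k := k) (h i j hij) n x
  have s0 := fun (i j : Fin 5) (hij : i ≠ j) (n : ℕ) => swap_pow (k := k) (h i j hij) n
  have p := fun (i : Fin 5) (n : ℕ) => (pow_succ' (e i) n).symm
  fin_cases i
  · refine ⟨1, ![n 0 + 1, n 1, n 2, n 3, n 4], ?_⟩
    simp [mon, pow_succ', mul_assoc]
  · refine ⟨(-1) ^ n 0, ![n 0, n 1 + 1, n 2, n 3, n 4], ?_⟩
    simp [mon, pow_succ', mul_assoc, s 1 0]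
  · refine ⟨(-1) ^ n 0 * (-1) ^ n 1, ![n 0, n 1, n 2 + 1, n 3, n 4], ?_⟩
    simp [mon, pow_succ', mul_assoc, s 2 0, s 2 1, mul_smul]
  · refine ⟨(-1) ^ n 0 * ((-1) ^ n 1 * (-1) ^ n 2), ![n 0, n 1, n 2, n 3 + 1, n 4], ?_⟩
    simp [mon, pow_succ', mul_assoc, s 3 0, s 3 1, s 3 2, mul_smul]
  · refine ⟨(-1) ^ n 0 * ((-1) ^ n 1 * ((-1) ^ n 2 * (-1) ^ n 3)),
      ![n 0, n 1, n 2, n 3, n 4 + 1], ?_⟩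
    simp [mon, pow_succ', mul_assoc, s 4 0, s 4 1, s 4 2, s 4 3, mul_smul]

theorem mon_red (e : Fin 5 → A) (q : Fin 5 → k) (hq : ∀ i, e i * e i = q i • (1 : A))
    (n : Fin 5 → ℕ) :
    ∃ (c : k) (m : Fin 5 → Fin 2), mon e n = c • mon e (fun i => (m i : ℕ)) := by
  choose c r hr using fun i => pow_red (hq i) (n i)
  refine ⟨c 0 * (c 1 * (c 2 * (c 3 * c 4))), r, ?_⟩
  simp only [mon, hr, smul_mul_assoc, mul_smul_comm, smul_smul]
  congr 1
  ring

/-- volume element -/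
def vol (e : Fin 5 → A) : A := e 0 * (e 1 * (e 2 * (e 3 * e 4)))

theorem vol_comm (e : Fin 5 → A) (h : ∀ i j, i ≠ j → e i * e j = -(e j * e i)) (i : Fin 5) :
    e i * vol e = vol e * e i := by
  have s : ∀ i j, i ≠ j → ∀ x, e i * (e j * x) = -(e j * (e i * x)) := by
    intro i j hij x
    rw [← mul_assoc, h i j hij, neg_mul, mul_assoc]
  fin_cases i <;>
  simp [vol, mul_assoc, s 1 0, s 2 0, s 3 0, s 4 0, s 2 1, s 3 1, s 4 1, s 3 2, s 4 2, s 4 3,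
    h 1 0, h 2 0, h 3 0, h 4 0, h 2 1, h 3 1, h 4 1, h 3 2, h 4 2, h 4 3]

theorem vol_sq (e : Fin 5 → A) (h : ∀ i j, i ≠ j → e i * e j = -(e j * e i))
    (q : Fin 5 → k) (hq : ∀ i, e i * e i = q i • (1 : A)) :
    vol e * vol e = (q 0 * (q 1 * (q 2 * (q 3 * q 4)))) • (1 : A) := by
  have s : ∀ i j, i ≠ j → ∀ x, e i * (e j * x) = -(e j * (e i * x)) := by
    intro i j hij x
    rw [← mul_assoc, h i j hij, neg_mul, mul_assoc]
  have t : ∀ i x, e i * (e i * x) = q i • x := by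
    intro i x
    rw [← mul_assoc, hq, smul_mul_assoc, one_mul]
  simp [vol, mul_assoc, s 1 0, s 2 0, s 3 0, s 4 0, s 2 1, s 3 1, s 4 1, s 3 2, s 4 2, s 4 3,
    h 1 0, h 2 0, h 3 0, h 4 0, h 2 1, h 3 1, h 4 1, h 3 2, h 4 2, h 4 3, t, hq, smul_smul]
  congr 1
  ring

theorem triple {a b c : A} (h1 : a * b = -(b * a)) (h2 : a * c = -(c * a))
    (h3 : b * c = -(c * b)) : a * (b * c) + c * (b * a) = 0 := by
  rw [h3, mul_neg, ← mul_assoc, h2, neg_mul, mul_assoc, h1]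
  simp

end Alg

section Cl

variable {k V : Type*} [Field k] [AddCommGroup V] [Module k V] {Q : QuadraticForm k V}

theorem span_mon (v : Module.Basis (Fin 5) k V)
    (h : ∀ i j, i ≠ j → ι Q (v i) * ι Q (v j) = -(ι Q (v j) * ι Q (v i))) :
    Submodule.span k (Set.range fun m : Fin 5 → Fin 2 =>
      mon (fun i => ι Q (v i)) (fun i => (m i : ℕ))) = ⊤ := by
  have hq : ∀ i, ι Q (v i) * ι Q (v i) = Q (v i) • (1 : CliffordAlgebra Q) := by
    intro i
    rw [ι_sq_scalar, Algebra.algebraMap_eq_smul_one]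
  set S := Submodule.span k (Set.range fun m : Fin 5 → Fin 2 =>
      mon (fun i => ι Q (v i)) (fun i => (m i : ℕ))) with hS
  have hm : ∀ n : Fin 5 → ℕ, mon (fun i => ι Q (v i)) n ∈ S := by
    intro n
    obtain ⟨c, m, hcm⟩ := mon_red (fun i => ι Q (v i)) (fun i => Q (v i)) hq n
    rw [hcm]
    exact S.smul_mem _ (Submodule.subset_span ⟨m, rfl⟩)
  rw [eq_top_iff]
  rintro x -
  induction x using CliffordAlgebra.left_induction with
  | algebraMap r =>
    rw [Algebra.algebraMap_eq_smul_one]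
    refine S.smul_mem _ ?_
    simpa [mon] using hm 0
  | add x y hx hy => exact S.add_mem hx hy
  | ι_mul x w hx =>
    have key : ∀ i, ∀ y ∈ S, ι Q (v i) * y ∈ S := by
      intro i y hy
      induction hy using Submodule.span_induction with
      | mem y hy =>
        obtain ⟨m, rfl⟩ := hy
        obtain ⟨c, n, hcn⟩ := mul_mon (k := k) (fun i => ι Q (v i)) h i (fun i => (m i : ℕ))
        simp only at hcn ⊢
        rw [hcn]
        exact S.smul_mem _ (hm n)
      | zero => simp
      | add y z _ _ hy hz => rw [mul_add]; exact S.add_mem hy hz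
      | smul c y _ hy => rw [mul_smul_comm]; exact S.smul_mem _ hy
    rw [← v.sum_repr w, map_sum, Finset.sum_mul]
    refine S.sum_mem fun i _ => ?_
    rw [map_smul, smul_mul_assoc]
    exact S.smul_mem _ (key i x hx)

set_option maxHeartbeats 1000000 in
theorem odd_sym (v : Module.Basis (Fin 5) k V)
    (h : ∀ i j, i ≠ j → ι Q (v i) * ι Q (v j) = -(ι Q (v j) * ι Q (v i)))
    (x : CliffordAlgebra Q) :
    (x - involute x) + reverse (x - involute x) ∈
      LinearMap.range (ι Q) ⊔ Submodule.span k {vol (fun i => ι Q (v i))} := by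
  set L := LinearMap.range (ι Q) ⊔ Submodule.span k {vol (fun i => ι Q (v i))} with hL
  have hx : x ∈ Submodule.span k (Set.range fun m : Fin 5 → Fin 2 =>
      mon (fun i => ι Q (v i)) (fun i => (m i : ℕ))) := by
    rw [span_mon v h]; trivial
  induction hx using Submodule.span_induction with
  | zero => simp
  | add y z _ _ hy hz =>
    have := L.add_mem hy hz
    simp only [map_add, map_sub] at this ⊢
    convert this using 1
    abel
  | smul c y _ hy =>
    have := L.smul_mem c hy
    simpa only [map_smul, map_sub, smul_add, smul_sub] using this
  | mem y hy =>
    obtain ⟨m, rfl⟩ := hy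
    have h1 : ∀ i, ι Q (v i) ∈ L := fun i => Submodule.mem_sup_left ⟨v i, rfl⟩
    have h1s : ∀ i, ι Q (v i) + ι Q (v i) + (ι Q (v i) + ι Q (v i)) ∈ L := fun i =>
      L.add_mem (L.add_mem (h1 i) (h1 i)) (L.add_mem (h1 i) (h1 i))
    have h5 : vol (fun i => ι Q (v i)) ∈ L :=
      Submodule.mem_sup_right (Submodule.mem_span_singleton_self _)
    have h3 : ∀ i j l, i ≠ j → i ≠ l → j ≠ l → 
        ι Q (v i) * (ι Q (v j) * ι Q (v l)) + ι Q (v i) * (ι Q (v j) * ι Q (v l)) +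
        (ι Q (v l) * (ι Q (v j) * ι Q (v i)) + ι Q (v l) * (ι Q (v j) * ι Q (v i))) ∈ L := by
      intro i j l hij hil hjl
      rw [add_add_add_comm, triple (h i j hij) (h i l hil) (h j l hjl)]
      simp
    have s : ∀ i j, i ≠ j → ∀ x, ι Q (v i) * (ι Q (v j) * x) = -(ι Q (v j) * (ι Q (v i) * x)) := by
      intro i j hij x
      rw [← mul_assoc, h i j hij, neg_mul, mul_assoc]
    have hr5 : ι Q (v 4) * (ι Q (v 3) * (ι Q (v 2) * (ι Q (v 1) * ι Q (v 0)))) =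
        vol (fun i => ι Q (v i)) := by
      simp [vol, s 1 0, s 2 0, s 3 0, s 4 0, s 2 1, s 3 1, s 4 1, s 3 2, s 4 2, s 4 3,
        h 1 0, h 2 0, h 3 0, h 4 0, h 2 1, h 3 1, h 4 1, h 3 2, h 4 2, h 4 3]
    obtain ⟨m0, hm0⟩ : ∃ a, a = m 0 := ⟨_, rfl⟩
    obtain ⟨m1, hm1⟩ : ∃ a, a = m 1 := ⟨_, rfl⟩
    obtain ⟨m2, hm2⟩ : ∃ a, a = m 2 := ⟨_, rfl⟩
    obtain ⟨m3, hm3⟩ : ∃ a, a = m 3 := ⟨_, rfl⟩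
    obtain ⟨m4, hm4⟩ : ∃ a, a = m 4 := ⟨_, rfl⟩
    simp only [mon, ← hm0, ← hm1, ← hm2, ← hm3, ← hm4]
    clear hm0 hm1 hm2 hm3 hm4
    have h01 : ∀ r : Fin 2, r = 0 ∨ r = 1 := by decide
    obtain rfl | rfl := h01 m0 <;> obtain rfl | rfl := h01 m1 <;> obtain rfl | rfl := h01 m2 <;>
    obtain rfl | rfl := h01 m3 <;> obtain rfl | rfl := h01 m4 <;>
    simp only [Fin.val_zero, Fin.val_one, pow_zero, pow_one, one_mul,
      mul_one, map_mul, involute_ι, reverse.map_mul, reverse_ι, mul_neg, neg_mul, neg_neg,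
      sub_neg_eq_add, sub_self, map_zero, add_zero, map_one, map_add, L.zero_mem, mul_assoc] <;>
    first
    | with_reducible exact h1s _
    | with_reducible exact h3 _ _ _ (by decide) (by decide) (by decide)
    | (rw [hr5]; exact L.add_mem (L.add_mem h5 h5) (L.add_mem h5 h5))

end Cl

section Main

variable {k V : Type*} [Field k] [AddCommGroup V] [Module k V] {Q : QuadraticForm k V}

theorem ι_zero [Invertible (2 : k)]
    (hreg : ∀ x : V, (∀ y : V, QuadraticMap.polar Q x y = 0) → x = 0)
    (u : V) (hu : ι Q u = 0) : u = 0 := by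
  refine hreg u fun y => ?_
  have := ι_mul_ι_add_swap (Q := Q) u y
  rw [hu, zero_mul, mul_zero, add_zero] at this
  exact (map_eq_zero_iff _ (algebraMap k (CliffordAlgebra Q)).injective).1 this.symm

theorem central_zero [Invertible (2 : k)] [FiniteDimensional k V]
    (hdim : Module.finrank k V = 5)
    (hreg : ∀ x : V, (∀ y : V, QuadraticMap.polar Q x y = 0) → x = 0)
    (w : V) (hw : ∀ y, ι Q w * ι Q y = ι Q y * ι Q w) : w = 0 := by
  by_contra hne
  have h2 : (2 : k) ≠ 0 := Invertible.ne_zero 2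
  have key : ∀ y, (2 : k) • (ι Q y * ι Q w) = QuadraticMap.polar Q w y • (1 : CliffordAlgebra Q) := by
    intro y
    rw [← Algebra.algebraMap_eq_smul_one, ← ι_mul_ι_add_swap, hw, two_smul]
  obtain ⟨z, hz⟩ : ∃ z, QuadraticMap.polar Q w z ≠ 0 := by
    by_contra hcon
    push Not at hcon
    exact hne (hreg w hcon)
  have hker : LinearMap.ker (QuadraticMap.polarBilin Q w) ≠ ⊥ :=
    LinearMap.ker_ne_bot_of_finrank_lt (by rw [hdim, Module.finrank_self]; norm_num)
  obtain ⟨u, hu, hu0⟩ := Submodule.exists_mem_ne_zero_of_ne_bot hker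
  have hu' : QuadraticMap.polar Q w u = 0 := hu
  have h1 : ι Q u * ι Q w = 0 := by
    have := key u
    rw [hu', zero_smul] at this
    exact (smul_eq_zero_iff_right h2).1 this
  apply hu0
  apply ι_zero hreg
  have h3 : ι Q u * ((2 : k) • (ι Q z * ι Q w)) = 0 := by
    rw [← hw, mul_smul_comm, ← mul_assoc, h1, zero_mul, smul_zero]
  rw [key, mul_smul_comm, mul_one] at h3
  exact (smul_eq_zero_iff_right hz).1 h3

end Main

end GSpinFive

open CliffordAlgebra GSpinFive in

/-- Let `(V,Q)` be a regular 5-dimensional quadratic space over a field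
`k` of characteristic not 2.  If `g` in the even Clifford algebra satisfies
`g* g ∈ k^×` (with `*` the canonical anti-involution, i.e. reversal), then `g` is a unit
and `g⁻¹ V g = V` (expressed as: for every `v ∈ V` there is `w ∈ V` with
`ι(v) g = g ι(w)`).  Hence `GSpin(V) = {g ∈ Cliff₀(V) : g* g ∈ k^×}`. -/
theorem gspin_condition_superfluous_dim_five
    {k V : Type*} [Field k] [AddCommGroup V] [Module k V]
    (hchar : (2 : k) ≠ 0)
    (Q : QuadraticForm k V)
    (hreg : ∀ x : V, (∀ y : V, QuadraticMap.polar Q x y = 0) → x = 0)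
    [FiniteDimensional k V] (hdim : Module.finrank k V = 5)
    (g : CliffordAlgebra Q)
    (hg_even : g ∈ CliffordAlgebra.evenOdd Q 0)
    (hg_norm : ∃ a : kˣ, CliffordAlgebra.reverse g * g
      = algebraMap k (CliffordAlgebra Q) (a : k)) :
    IsUnit g ∧ ∀ v : V, ∃ w : V,
      CliffordAlgebra.ι Q v * g = g * CliffordAlgebra.ι Q w := by
  classical
  letI : Invertible (2 : k) := invertibleOfNonzero hchar
  obtain ⟨v0, hv0⟩ := LinearMap.BilinForm.exists_orthogonal_basis
    (B := QuadraticMap.associated Q) ⟨QuadraticMap.associated_isSymm k Q⟩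
  let v : Module.Basis (Fin 5) k V := v0.reindex (finCongr hdim)
  have hpol : ∀ i j, i ≠ j → QuadraticMap.polar Q (v i) (v j) = 0 := by
    intro i j hij
    have h1 : QuadraticMap.associated Q (v i) (v j) = 0 := by
      have hne : (finCongr hdim).symm i ≠ (finCongr hdim).symm j := by simpa using hij
      have := hv0 hne
      simpa [v, LinearMap.IsOrtho] using this
    have h2 := QuadraticMap.two_nsmul_associated k Q
    have h3 := congrArg (fun f => f (v i) (v j)) h2
    simp only [LinearMap.smul_apply, QuadraticMap.polarBilin_apply_apply] at h3
    rw [← h3, h1, smul_zero]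
  have hanti : ∀ i j, i ≠ j → ι Q (v i) * ι Q (v j) = -(ι Q (v j) * ι Q (v i)) := by
    intro i j hij
    rw [eq_neg_iff_add_eq_zero, ι_mul_ι_add_swap, hpol i j hij, map_zero]
  have hQ : ∀ i, Q (v i) ≠ 0 := by
    intro i hi
    refine v.ne_zero i (hreg _ fun y => ?_)
    have : QuadraticMap.polarBilin Q (v i) = 0 := by
      refine v.ext fun j => ?_
      rw [QuadraticMap.polarBilin_apply_apply, LinearMap.zero_apply]
      by_cases hij : i = j
      · subst hij
        rw [QuadraticMap.polar_self, hi, smul_zero]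
      · exact hpol i j hij
    exact congrArg (fun f => f y) this
  set ω := vol (fun i => ι Q (v i)) with hω
  have hωc : ∀ x, x * ω = ω * x := by
    intro x
    induction x using CliffordAlgebra.left_induction with
    | algebraMap r => exact Algebra.commutes r ω
    | add x y hx hy => rw [add_mul, mul_add, hx, hy]
    | ι_mul x w hx =>
      have : ι Q w * ω = ω * ι Q w := by
        rw [← v.sum_repr w, map_sum, Finset.sum_mul, Finset.mul_sum]
        refine Finset.sum_congr rfl fun i _ => ?_
        rw [map_smul, smul_mul_assoc, mul_smul_comm]
        congr 1
        exact vol_comm (fun i => ι Q (v i)) hanti i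
      rw [mul_assoc, hx, ← mul_assoc, this, mul_assoc]
  obtain ⟨d, hd0, hd⟩ : ∃ d : k, d ≠ 0 ∧ ω * ω = d • (1 : CliffordAlgebra Q) := by
    refine ⟨_, ?_, vol_sq (fun i => ι Q (v i)) hanti (fun i => Q (v i)) ?_⟩
    · simp [hQ]
    · intro i
      rw [ι_sq_scalar, Algebra.algebraMap_eq_smul_one]
  have hfin : FiniteDimensional k (CliffordAlgebra Q) :=
    ⟨⟨(Set.finite_range _).toFinset, by
      rw [Set.Finite.coe_toFinset]; exact span_mon v hanti⟩⟩
  have hart : IsArtinianRing (CliffordAlgebra Q) := IsArtinianRing.of_finite k _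
  obtain ⟨a, ha⟩ := hg_norm
  have ha0 : (a : k) ≠ 0 := a.ne_zero
  rw [Algebra.algebraMap_eq_smul_one] at ha
  have hl : ((a : k)⁻¹ • reverse g) * g = 1 := by
    rw [smul_mul_assoc, ha, smul_smul, inv_mul_cancel₀ ha0, one_smul]
  have hr : g * ((a : k)⁻¹ • reverse g) = 1 := mul_eq_one_comm.mp hl
  have ha' : g * reverse g = (a : k) • (1 : CliffordAlgebra Q) := by
    rw [← hr, mul_smul_comm, smul_smul, mul_inv_cancel₀ ha0, one_smul]
  refine ⟨⟨⟨g, _, hr, hl⟩, rfl⟩, fun u => ?_⟩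
  set x := reverse g * ι Q u * g with hx
  have hgx : g * x = (a : k) • (ι Q u * g) := by
    rw [hx, ← mul_assoc, ← mul_assoc, ha', smul_mul_assoc, one_mul, smul_mul_assoc]
  suffices hs : ∃ w, x = ι Q w by
    obtain ⟨w, hw⟩ := hs
    refine ⟨(a : k)⁻¹ • w, ?_⟩
    rw [map_smul, mul_smul_comm, ← hw, hgx, smul_smul, inv_mul_cancel₀ ha0, one_smul]
  have hge : involute g = g := involute_eq_of_mem_even hg_even
  have hrx : reverse x = x := by
    simp [hx, reverse.map_mul, mul_assoc]
  have hix : involute x = -x := by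
    rw [hx, map_mul, map_mul, involute_ι, ← reverse_involute, hge]
    simp
  have hmem := odd_sym v hanti x
  rw [hix, sub_neg_eq_add, map_add, hrx, ← hω] at hmem
  obtain ⟨w, c, hwc⟩ : ∃ (w : V) (c : k), x = ι Q w + c • ω := by
    obtain ⟨y, ⟨w, rfl⟩, z, hz, hyz⟩ := Submodule.mem_sup.1 hmem
    obtain ⟨c, rfl⟩ := Submodule.mem_span_singleton.1 hz
    refine ⟨((2 : k)⁻¹ * (2 : k)⁻¹) • w, ((2 : k)⁻¹ * (2 : k)⁻¹) * c, ?_⟩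
    rw [map_smul, ← smul_smul _ c, ← smul_add, hyz, ← two_smul k x, ← two_smul k ((2 : k) • x),
      smul_smul, smul_smul]
    rw [show (2 : k)⁻¹ * 2⁻¹ * 2 * 2 = 1 by field_simp, one_smul]
  by_cases hc : c = 0
  · exact ⟨w, by rw [hwc, hc, zero_smul, add_zero]⟩
  have hxx : x * x = ((a : k) * a * Q u) • (1 : CliffordAlgebra Q) := by
    have : x * x = reverse g * ι Q u * (g * x) := by rw [hx]; simp only [mul_assoc]
    rw [this, hgx, mul_smul_comm, mul_assoc, ← mul_assoc (ι Q u), ι_sq_scalar,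
      Algebra.algebraMap_eq_smul_one, smul_mul_assoc, one_mul, mul_smul_comm, ha, smul_smul,
      smul_smul]
    congr 1
    ring
  have hexp : x * x = Q w • (1 : CliffordAlgebra Q) + (c * c * d) • (1 : CliffordAlgebra Q)
      + (2 * c) • (ι Q w * ω) := by
    rw [hwc, mul_add, add_mul, add_mul, ι_sq_scalar, Algebra.algebraMap_eq_smul_one]
    simp only [smul_mul_assoc, mul_smul_comm, hd, ← hωc (ι Q w), smul_smul]
    rw [two_mul, add_smul]
    generalize c • (ι Q w * ω) = p
    generalize Q w • (1 : CliffordAlgebra Q) = q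
    rw [mul_assoc c c d]
    abel
  have hwω : ∃ s : k, ι Q w * ω = s • (1 : CliffordAlgebra Q) := by
    refine ⟨(2 * c)⁻¹ * ((a : k) * a * Q u - Q w - c * c * d), ?_⟩
    rw [← smul_smul, sub_smul, sub_smul, ← hxx, hexp]
    rw [show ∀ p q r : CliffordAlgebra Q, p + q + r - p - q = r by intros; abel, smul_smul,
      inv_mul_cancel₀ (mul_ne_zero hchar hc), one_smul]
  obtain ⟨s, hs⟩ := hwω
  have hw' : ι Q w = (d⁻¹ * s) • ω := by
    have : d • ι Q w = s • ω := by
      have h1 : ι Q w * ω * ω = s • ω := by rw [hs, smul_mul_assoc, one_mul]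
      rwa [mul_assoc, hd, mul_smul_comm, mul_one] at h1
    rw [← smul_smul, ← this, smul_smul, inv_mul_cancel₀ hd0, one_smul]
  have hw0 : w = 0 := by
    refine central_zero hdim hreg w fun y => ?_
    rw [hw', smul_mul_assoc, mul_smul_comm, hωc]
  have hxω : x = c • ω := by rw [hwc, hw0, map_zero, zero_add]
  have hu' : ι Q u = ((a : k)⁻¹ * c) • ω := by
    have h1 : (ι Q u * g) = (ι Q u * g) := rfl
    have h2 : ι Q u * g = (((a : k)⁻¹ * c) • ω) * g := by
      rw [← smul_smul, smul_mul_assoc, smul_mul_assoc, ← hωc, ← mul_smul_comm, ← hxω, hgx,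
        smul_smul, inv_mul_cancel₀ ha0, one_smul]
    have h3 := congrArg (· * ((a : k)⁻¹ • reverse g)) h2
    simp only [mul_assoc, hr, mul_one] at h3
    exact h3
  have hu0 : u = 0 := by
    refine central_zero hdim hreg u fun y => ?_
    rw [hu', smul_mul_assoc, mul_smul_comm, hωc]
  exact ⟨0, by rw [hx, hu0]; simp⟩
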